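/- Let f : (Fin n → ℝ) → ℝ be a function that is Fréchet differentiable at a point x, and for each i let v i = D f x (e i) denote the i-th partial derivative of f at x (the derivative applied to the i-th standard basis vector e i). Define g(ε) = sup over all δ with ‖δ‖∞ ≤ ε of |f(x + δ) − f(x)|. Then g(ε) = ε * ∑ i, |v i| + o(ε) as ε → 0⁺; that is, (g(ε) − ε * ∑ i, |v i|) / ε tends to 0 as ε tends to 0 from the right. (Precise form of the first-order approximation ΔL₀ ≈ ε‖∇ₓL(B[x])‖₁ in Eq. (10) of the paper.) -/

import Mathlib

/-!
A first-order expansion `f (x + δ) = f x + f' δ + o(‖δ‖)` is uniform on small balls, so the largest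
increment of `f` on the ball of radius `ε` differs by `o(ε)` from the largest value of `‖f' δ‖`
there, which is `ε * ‖f'‖`. For a functional on `ℓ∞`, the operator norm is the `ℓ¹` norm of its
coefficients.
-/

open Asymptotics Filter Metric Set
open scoped Topology

theorem abs_sSup_image_sub_le_of_isLUB {α : Type*} {s : Set α} {a b : α → ℝ} {M C : ℝ}
    (hb : IsLUB (b '' s) M) (hab : ∀ i ∈ s, |a i - b i| ≤ C) : |sSup (a '' s) - M| ≤ C := by
  have hs : s.Nonempty := hb.nonempty.of_image
  have ha_le : ∀ y ∈ a '' s, y ≤ M + C := by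
    rintro _ ⟨i, hi, rfl⟩
    linarith [(abs_le.1 (hab i hi)).2, hb.1 (mem_image_of_mem b hi)]
  have hupper : sSup (a '' s) ≤ M + C := csSup_le (hs.image a) ha_le
  have hlower : M ≤ sSup (a '' s) + C := by
    refine hb.2 ?_
    rintro _ ⟨i, hi, rfl⟩
    linarith [(abs_le.1 (hab i hi)).1, le_csSup ⟨_, ha_le⟩ (mem_image_of_mem a hi)]
  exact abs_sub_le_iff.2 ⟨by linarith, by linarith⟩

theorem pi_norm_eq_iSup_norm {ι : Type*} [Fintype ι] {E : ι → Type*}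
    [∀ i, SeminormedAddCommGroup (E i)] (δ : ∀ i, E i) : ‖δ‖ = ⨆ i, ‖δ i‖ := by
  rw [← PiLp.norm_toLp, PiLp.norm_eq_ciSup]

theorem opNorm_pi_eq_sum_norm_single {𝕜 ι : Type*} [RCLike 𝕜] [Fintype ι] [DecidableEq ι]
    (L : (ι → 𝕜) →L[𝕜] 𝕜) : ‖L‖ = ∑ i, ‖L (Pi.single i 1)‖ := by
  have hL (δ : ι → 𝕜) : L δ = ∑ i, δ i * L (Pi.single i 1) := by
    conv_lhs => rw [pi_eq_sum_univ' δ]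
    simp only [map_sum, map_smul, smul_eq_mul]
  refine le_antisymm (L.opNorm_le_bound (by positivity) fun δ => ?_) ?_
  · calc ‖L δ‖ ≤ ∑ i, ‖δ i * L (Pi.single i 1)‖ := hL δ ▸ norm_sum_le _ _
      _ ≤ ∑ i, ‖L (Pi.single i 1)‖ * ‖δ‖ := by
        gcongr with i
        rw [norm_mul, mul_comm]
        gcongr
        exact norm_le_pi_norm δ i
      _ = (∑ i, ‖L (Pi.single i 1)‖) * ‖δ‖ := (Finset.sum_mul ..).symm
  · set v : ι → 𝕜 := fun i => L (Pi.single i 1)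
    -- `L` attains its norm at this vector; where `v i = 0`, the entry is `0 / 0 = 0`.
    let phase : ι → 𝕜 := fun i => starRingEnd 𝕜 (v i) / ‖v i‖
    have hphase : ‖phase‖ ≤ 1 := by
      refine (pi_norm_le_iff_of_nonneg zero_le_one).2 fun i => ?_
      simpa [phase] using div_self_le_one ‖v i‖
    have hLphase : L phase = ((∑ i, ‖v i‖ : ℝ) : 𝕜) := by
      rw [hL, RCLike.ofReal_sum]
      refine Finset.sum_congr rfl fun i _ => ?_
      rw [div_mul_eq_mul_div, RCLike.conj_mul, sq, mul_self_div_self]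
    calc ∑ i, ‖v i‖ = ‖L phase‖ := by
          rw [hLphase, RCLike.norm_of_nonneg (by positivity)]
      _ ≤ ‖L‖ := L.unit_le_opNorm phase hphase

/-- The largest change of `f` under a perturbation `‖δ‖ ≤ ε` of `x`: the paper's loss change,
for arbitrary norms. As the `sSup` of an unbounded set it is the junk value `0` where `f` is
unbounded on the ball; near a point of differentiability this happens only for large `ε`. -/
noncomputable def supNormIncrement {E F : Type*} [SeminormedAddCommGroup E]
    [SeminormedAddCommGroup F] (f : E → F) (x : E) (ε : ℝ) : ℝ :=
  sSup ((fun δ => ‖f (x + δ) - f x‖) '' closedBall 0 ε)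

section NormedSpace

variable {𝕜 E F : Type*} [RCLike 𝕜] [NormedAddCommGroup E] [NormedSpace 𝕜 E]
  [NormedAddCommGroup F] [NormedSpace 𝕜 F]

theorem isLUB_norm_image_closedBall (L : E →L[𝕜] F) {ε : ℝ} (hε : 0 ≤ ε) :
    IsLUB ((fun δ => ‖L δ‖) '' closedBall 0 ε) (ε * ‖L‖) := by
  have hunit : IsLUB ((fun δ => ‖L δ‖) '' closedBall 0 1) ‖L‖ := by
    rw [← L.sSup_unitClosedBall_eq_norm]
    refine isLUB_csSup ((nonempty_closedBall.2 zero_le_one).image _) ⟨‖L‖, ?_⟩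
    rintro _ ⟨δ, hδ, rfl⟩
    exact L.unit_le_opNorm δ (mem_closedBall_zero_iff.1 hδ)
  have hball : closedBall (0 : E) ε = (fun δ => (ε : 𝕜) • δ) '' closedBall 0 1 := by
    rw [image_smul, smul_unitClosedBall, RCLike.norm_of_nonneg hε]
  have himage : (fun δ => ‖L δ‖) '' closedBall 0 ε =
      (fun y => ε * y) '' ((fun δ => ‖L δ‖) '' closedBall 0 1) := by
    simp only [hball, image_image, map_smul, norm_smul, RCLike.norm_of_nonneg hε]
  exact himage ▸ hunit.mul_left hε

theorem sup_loss_change_first_order_general {f : E → F} {f' : E →L[𝕜] F} {x : E}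
    (hf : HasFDerivAt f f' x) :
    Tendsto (fun ε : ℝ => (supNormIncrement f x ε - ε * ‖f'‖) / ε) (𝓝[>] 0) (𝓝 0) := by
  refine IsLittleO.tendsto_div_nhds_zero (IsLittleO.of_bound fun c hc => ?_)
  have hrem : ∀ᶠ δ in 𝓝 0, ‖f (x + δ) - f x - f' δ‖ ≤ c * ‖δ‖ :=
    (hasFDerivAt_iff_isLittleO_nhds_zero.1 hf).def hc
  filter_upwards [nhdsWithin_le_nhds (eventually_closedBall_subset hrem), self_mem_nhdsWithin]
    with ε hball (hε : 0 < ε)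
  refine abs_sSup_image_sub_le_of_isLUB (isLUB_norm_image_closedBall f' hε.le) fun δ hδ => ?_
  calc |‖f (x + δ) - f x‖ - ‖f' δ‖|
      ≤ ‖f (x + δ) - f x - f' δ‖ := abs_norm_sub_norm_le _ _
    _ ≤ c * ‖δ‖ := hball hδ
    _ ≤ c * ‖ε‖ := by
      gcongr
      exact (mem_closedBall_zero_iff.1 hδ).trans (le_abs_self ε)

end NormedSpace

/-- If `f` is Fréchet differentiable at `x` with partial derivatives `v i`, and
`g ε` is the supremum of `|f (x + δ) - f x|` over the closed `ℓ∞` ball `‖δ‖∞ ≤ ε`,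
then `g ε = ε * ∑ i, |v i| + o(ε)` as `ε → 0⁺`. -/
theorem sup_loss_change_first_order (n : ℕ) (f : (Fin n → ℝ) → ℝ) (x : Fin n → ℝ)
    (hf : DifferentiableAt ℝ f x) (v : Fin n → ℝ)
    (hv : ∀ i, v i = fderiv ℝ f x (Pi.single i 1))
    (g : ℝ → ℝ)
    (hg : ∀ ε : ℝ, g ε =
      sSup {y : ℝ | ∃ δ : Fin n → ℝ, (⨆ i, |δ i|) ≤ ε ∧ y = |f (x + δ) - f x|}) :
    Filter.Tendsto (fun ε : ℝ => (g ε - ε * ∑ i, |v i|) / ε)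
      (nhdsWithin 0 (Set.Ioi 0)) (nhds 0) := by
  have hsum : ∑ i, |v i| = ‖fderiv ℝ f x‖ := by
    simp only [opNorm_pi_eq_sum_norm_single, hv, Real.norm_eq_abs]
  have hsup : g = supNormIncrement f x := by
    ext ε
    simp only [hg, supNormIncrement, image, mem_closedBall_zero_iff, pi_norm_eq_iSup_norm,
      Real.norm_eq_abs, eq_comm]
  simpa only [hsum, hsup] using sup_loss_change_first_order_general hf.hasFDerivAt
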